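/- arXiv:1504.05219 — 2 statements merged into one kernel-verified Lean document; each statement's English description precedes it below -/
import Mathlib

section
/- Let α_1, α_2 ≥ 0 with α_1 + α_2 = 1, α_1 > 1/2, α_2 > 0, and let r > 0 be a real number. If (α_1 + α_2·exp(θ))^r is the Laplace transform of a probability measure on ℝ, then r is a natural number. -/
open MeasureTheory Real

/-!
Write `L` for the Laplace transform of `μ`. From `L θ = (a + b * exp θ) ^ r` we get the linear
differential equation `(a + b * exp θ) * L' θ = r * b * exp θ * L θ`. By uniqueness of Laplace
transforms it says that `a * x * μ(dx)` is the translate by `1` of `b * (r - x) * μ(dx)`, a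
measure-valued form of the recurrence `a * (k + 1) * p (k + 1) = b * (r - k) * p k` for binomial
weights. Comparing signs, `μ` gives no mass to a neighbourhood of `-∞`; and the recurrence carries
null sets one unit to the right as long as they avoid `0`, so `μ` is carried by `ℕ`. The recurrence
is preserved, with `a` and `b` exchanged, by the reflection `x ↦ r - x`, so `μ` is also carried by
`r - ℕ`. As `μ ≠ 0`, these two sets meet, whence `r ∈ ℕ`.
-/

section

open ProbabilityTheory Filter Topology Set

lemma measure_eq_zero_of_ae_restrict_eq_zero {α : Type*} [MeasurableSpace α]
    {μ : Measure α} {f : α → ℝ} {s : Set α} (hs : MeasurableSet s)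
    (hf : f =ᵐ[μ.restrict s] 0) (h_ne : ∀ x ∈ s, f x ≠ 0) : μ s = 0 := by
  rw [measure_eq_zero_iff_ae_notMem]
  filter_upwards [(ae_restrict_iff' hs).1 hf] with x hx hxs using h_ne x hxs (hx hxs)

section PosDensity

variable {α : Type*} [MeasurableSpace α] {μ : Measure α} {f φ : α → ℝ}

/-- The measure `f⁺ μ`. A density of variable sign is encoded by the pair `posDensity μ f`,
`posDensity μ (-f)`, as `f μ` is their difference; `ENNReal.ofReal` cuts off negative values. -/
noncomputable def posDensity (μ : Measure α) (f : α → ℝ) : Measure α :=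
  μ.withDensity fun x ↦ ENNReal.ofReal (f x)

lemma isFiniteMeasure_posDensity (hf : Integrable f μ) : IsFiniteMeasure (posDensity μ f) :=
  isFiniteMeasure_withDensity_ofReal hf.hasFiniteIntegral

lemma integrable_posDensity_iff (hf : AEMeasurable f μ) :
    Integrable φ (posDensity μ f) ↔ Integrable (fun x ↦ max (f x) 0 * φ x) μ := by
  rw [posDensity, integrable_withDensity_iff_integrable_smul₀' hf.ennreal_ofReal
    (ae_of_all _ fun _ ↦ ENNReal.ofReal_lt_top)]
  simp only [ENNReal.toReal_ofReal', smul_eq_mul]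

lemma integrable_posDensity (hf : AEMeasurable f μ) (hφ : AEMeasurable φ μ)
    (hfφ : Integrable (fun x ↦ f x * φ x) μ) : Integrable φ (posDensity μ f) := by
  refine (integrable_posDensity_iff hf).2 (hfφ.mono (by fun_prop) (ae_of_all _ fun x ↦ ?_))
  rw [norm_mul, norm_mul]
  gcongr
  rw [norm_of_nonneg (le_max_right _ _), norm_eq_abs]
  exact max_le (le_abs_self _) (abs_nonneg _)

lemma integral_posDensity (hf : AEMeasurable f μ) (φ : α → ℝ) :
    ∫ x, φ x ∂posDensity μ f = ∫ x, max (f x) 0 * φ x ∂μ := by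
  rw [posDensity, integral_withDensity_eq_integral_toReal_smul₀ hf.ennreal_ofReal
    (ae_of_all _ fun _ ↦ ENNReal.ofReal_lt_top)]
  simp only [ENNReal.toReal_ofReal', smul_eq_mul]

lemma integral_posDensity_sub_integral_posDensity_neg (hf : AEMeasurable f μ)
    (hφ : AEMeasurable φ μ) (hfφ : Integrable (fun x ↦ f x * φ x) μ) :
    ∫ x, φ x ∂posDensity μ f - ∫ x, φ x ∂posDensity μ (-f) = ∫ x, f x * φ x ∂μ := by
  have hfφ_neg : Integrable (fun x ↦ (-f) x * φ x) μ := by simpa using hfφ.neg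
  have h_int := (integrable_posDensity_iff hf).1 (integrable_posDensity hf hφ hfφ)
  have h_int_neg := (integrable_posDensity_iff hf.neg).1 (integrable_posDensity hf.neg hφ hfφ_neg)
  rw [integral_posDensity hf, integral_posDensity hf.neg, ← integral_sub h_int h_int_neg]
  simp only [← sub_mul, Pi.neg_apply, max_zero_sub_max_neg_zero_eq_self]

lemma real_posDensity_sub_real_posDensity_neg (hf : Integrable f μ)
    {s : Set α} (hs : MeasurableSet s) :
    (posDensity μ f).real s - (posDensity μ (-f)).real s = ∫ x in s, f x ∂μ := by
  have h_mul : (fun x ↦ f x * s.indicator 1 x) = s.indicator f := by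
    ext x
    by_cases hx : x ∈ s <;> simp [hx]
  have h_sub := integral_posDensity_sub_integral_posDensity_neg hf.aemeasurable
    (φ := s.indicator 1) (by measurability) (h_mul ▸ hf.indicator hs)
  rwa [integral_indicator_one hs, integral_indicator_one hs, h_mul, integral_indicator hs] at h_sub

end PosDensity

section Uniqueness

variable {μ ν : Measure ℝ}

lemma frequently_ofReal_nhdsNE {p : ℂ → Prop} {t : ℝ} (h : ∀ᶠ s : ℝ in 𝓝 t, p s) :
    ∃ᶠ z in 𝓝[≠] (t : ℂ), p z := by
  have hcast : Tendsto ((↑) : ℝ → ℂ) (𝓝[≠] t) (𝓝[≠] (t : ℂ)) :=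
    Complex.continuous_ofReal.continuousAt.continuousWithinAt.tendsto_nhdsWithin
      fun s hs ↦ by simpa using hs
  exact hcast.frequently (h.filter_mono nhdsWithin_le_nhds).frequently

theorem measure_eq_of_mgf_id_eventuallyEq [IsFiniteMeasure μ] [IsFiniteMeasure ν]
    (hμ : 0 ∈ interior (integrableExpSet id μ)) (hν : 0 ∈ interior (integrableExpSet id ν))
    (h : mgf id μ =ᶠ[𝓝 0] mgf id ν) : μ = ν := by
  set I := interior (integrableExpSet id μ) ∩ interior (integrableExpSet id ν)
  have hI : Convex ℝ I := convex_integrableExpSet.interior.inter convex_integrableExpSet.interior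
  have h_eqOn : EqOn (complexMGF id μ) (complexMGF id ν) {z | z.re ∈ I} := by
    refine AnalyticOnNhd.eqOn_of_preconnected_of_frequently_eq (z₀ := ((0 : ℝ) : ℂ))
      (fun z hz ↦ analyticAt_complexMGF hz.1) (fun z hz ↦ analyticAt_complexMGF hz.2)
      (hI.linear_preimage Complex.reLm).isPreconnected ⟨hμ, hν⟩ (frequently_ofReal_nhdsNE ?_)
    filter_upwards [h] with s hs
    rw [complexMGF_ofReal, complexMGF_ofReal, hs]
  refine Measure.ext_of_charFun (funext fun t ↦ ?_)
  rw [← complexMGF_id_mul_I, ← complexMGF_id_mul_I]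
  exact h_eqOn (by simpa using ⟨hμ, hν⟩)

lemma eventually_mem_integrableExpSet_posDensity {f : ℝ → ℝ}
    (hf : ∀ᶠ θ in 𝓝 (0 : ℝ), Integrable (fun x ↦ f x * exp (θ * x)) μ) :
    ∀ᶠ θ in 𝓝 0, θ ∈ integrableExpSet id (posDensity μ f) := by
  have hf_meas : AEMeasurable f μ := by simpa using hf.self_of_nhds.aemeasurable
  filter_upwards [hf] with θ hθ using integrable_posDensity hf_meas (by fun_prop) hθ

theorem posDensity_add_posDensity_neg_eq {f g : ℝ → ℝ}
    (hf : ∀ᶠ θ in 𝓝 (0 : ℝ), Integrable (fun x ↦ f x * exp (θ * x)) μ)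
    (hg : ∀ᶠ θ in 𝓝 (0 : ℝ), Integrable (fun x ↦ g x * exp (θ * x)) ν)
    (h : ∀ᶠ θ in 𝓝 (0 : ℝ), ∫ x, f x * exp (θ * x) ∂μ = ∫ x, g x * exp (θ * x) ∂ν) :
    posDensity μ f + posDensity ν (-g) = posDensity ν g + posDensity μ (-f) := by
  have hf0 : Integrable f μ := by simpa using hf.self_of_nhds
  have hg0 : Integrable g ν := by simpa using hg.self_of_nhds
  have hf_neg : ∀ᶠ θ in 𝓝 (0 : ℝ), Integrable (fun x ↦ (-f) x * exp (θ * x)) μ :=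
    hf.mono fun θ hθ ↦ by simpa using hθ.neg
  have hg_neg : ∀ᶠ θ in 𝓝 (0 : ℝ), Integrable (fun x ↦ (-g) x * exp (θ * x)) ν :=
    hg.mono fun θ hθ ↦ by simpa using hθ.neg
  have := isFiniteMeasure_posDensity hf0
  have := isFiniteMeasure_posDensity hf0.neg
  have := isFiniteMeasure_posDensity hg0
  have := isFiniteMeasure_posDensity hg0.neg
  have hPf := eventually_mem_integrableExpSet_posDensity hf
  have hNf := eventually_mem_integrableExpSet_posDensity hf_neg
  have hPg := eventually_mem_integrableExpSet_posDensity hg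
  have hNg := eventually_mem_integrableExpSet_posDensity hg_neg
  refine measure_eq_of_mgf_id_eventuallyEq
    (mem_interior_iff_mem_nhds.2 (hPf.and hNg |>.mono fun θ hθ ↦ hθ.1.add_measure hθ.2))
    (mem_interior_iff_mem_nhds.2 (hPg.and hNf |>.mono fun θ hθ ↦ hθ.1.add_measure hθ.2)) ?_
  filter_upwards [hf, hg, h, hPf, hNf, hPg, hNg] with θ hfθ hgθ hθ hPfθ hNfθ hPgθ hNgθ
  rw [mgf_add_measure hPfθ hNgθ, mgf_add_measure hPgθ hNfθ]
  have h_sub_f := integral_posDensity_sub_integral_posDensity_neg hf0.aemeasurable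
    (by fun_prop) hfθ
  have h_sub_g := integral_posDensity_sub_integral_posDensity_neg hg0.aemeasurable
    (by fun_prop) hgθ
  simp only [mgf, id]
  linarith

theorem setIntegral_eq_of_eventually_integral_mul_exp_eq {f g : ℝ → ℝ}
    (hf : ∀ᶠ θ in 𝓝 (0 : ℝ), Integrable (fun x ↦ f x * exp (θ * x)) μ)
    (hg : ∀ᶠ θ in 𝓝 (0 : ℝ), Integrable (fun x ↦ g x * exp (θ * x)) ν)
    (h : ∀ᶠ θ in 𝓝 (0 : ℝ), ∫ x, f x * exp (θ * x) ∂μ = ∫ x, g x * exp (θ * x) ∂ν)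
    {s : Set ℝ} (hs : MeasurableSet s) : ∫ x in s, f x ∂μ = ∫ x in s, g x ∂ν := by
  have hf0 : Integrable f μ := by simpa using hf.self_of_nhds
  have hg0 : Integrable g ν := by simpa using hg.self_of_nhds
  have := isFiniteMeasure_posDensity hf0
  have := isFiniteMeasure_posDensity hf0.neg
  have := isFiniteMeasure_posDensity hg0
  have := isFiniteMeasure_posDensity hg0.neg
  have h_real : (posDensity μ f + posDensity ν (-g)).real s
      = (posDensity ν g + posDensity μ (-f)).real s := by
    rw [posDensity_add_posDensity_neg_eq hf hg h]
  rw [measureReal_add_apply, measureReal_add_apply] at h_real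
  rw [← real_posDensity_sub_real_posDensity_neg hf0 hs,
    ← real_posDensity_sub_real_posDensity_neg hg0 hs]
  linarith

end Uniqueness

/-- The identity `a x μ(dx) = b τ((r - x) μ(dx))` of signed measures, where `τ` is translation by
`1`. For `μ = ∑ k, p k • δ_k` it is the recurrence `a * (k + 1) * p (k + 1) = b * (r - k) * p k` of
the binomial weights `p k = r.choose k * a ^ (r - k) * b ^ k`. -/
structure BinomialRecurrence (a b r : ℝ) (μ : Measure ℝ) : Prop where
  integrable_id : Integrable (fun x ↦ x) μ
  setIntegral_eq {s : Set ℝ} (hs : MeasurableSet s) :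
    a * ∫ x in s, x ∂μ = b * ∫ x in (· + 1) ⁻¹' s, (r - x) ∂μ

lemma add_mul_exp_mul_deriv_eq_of_eventuallyEq_rpow {a b r θ : ℝ} {L : ℝ → ℝ}
    (hθ : a + b * exp θ ≠ 0) (h : L =ᶠ[𝓝 θ] fun t ↦ (a + b * exp t) ^ r) :
    (a + b * exp θ) * deriv L θ = r * b * exp θ * L θ := by
  have h_deriv : HasDerivAt (fun t ↦ (a + b * exp t) ^ r)
      (b * exp θ * r * (a + b * exp θ) ^ (r - 1)) θ :=
    (((hasDerivAt_exp θ).const_mul b).const_add a).rpow_const (.inl hθ)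
  rw [h.deriv_eq, h_deriv.deriv, h.self_of_nhds, rpow_sub_one hθ]
  field_simp

lemma eventually_add_mul_exp_mul_integral_eq {a b r : ℝ} {μ : Measure ℝ} (hab : a + b ≠ 0)
    (hμ : 0 ∈ interior (integrableExpSet id μ))
    (h : mgf id μ =ᶠ[𝓝 0] fun θ ↦ (a + b * exp θ) ^ r) :
    ∀ᶠ θ in 𝓝 (0 : ℝ), (a + b * exp θ) * ∫ x, x * exp (θ * x) ∂μ
      = r * b * exp θ * ∫ x, exp (θ * x) ∂μ := by
  have h_ne : ∀ᶠ θ in 𝓝 (0 : ℝ), a + b * exp θ ≠ 0 :=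
    ContinuousAt.eventually_ne (by fun_prop) (by simpa using hab)
  filter_upwards [isOpen_interior.eventually_mem hμ, h.eventually_nhds, h_ne] with θ hθ h_eq hθ0
  have h_mgf := add_mul_exp_mul_deriv_eq_of_eventuallyEq_rpow hθ0 h_eq
  rwa [(hasDerivAt_mgf hθ).deriv] at h_mgf

namespace BinomialRecurrence

variable {a b r : ℝ} {μ : Measure ℝ}

theorem of_mgf_eventuallyEq (hab : a + b ≠ 0) (hμ : 0 ∈ interior (integrableExpSet id μ))
    (h : mgf id μ =ᶠ[𝓝 0] fun θ ↦ (a + b * exp θ) ^ r) : BinomialRecurrence a b r μ := by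
  have h_exp : ∀ᶠ θ in 𝓝 (0 : ℝ), Integrable (fun x ↦ exp (θ * x)) μ :=
    mem_interior_iff_mem_nhds.1 hμ
  have h_mul_exp : ∀ᶠ θ in 𝓝 (0 : ℝ), Integrable (fun x ↦ x * exp (θ * x)) μ :=
    (isOpen_interior.eventually_mem hμ).mono fun θ hθ ↦ by
      simpa using integrable_pow_mul_exp_of_mem_interior_integrableExpSet hθ 1
  have h_ode := eventually_add_mul_exp_mul_integral_eq hab hμ h
  have h_shift (θ x : ℝ) : b * (r - (x + 1 - 1)) * exp (θ * (x + 1))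
      = b * exp θ * (r * exp (θ * x) - x * exp (θ * x)) := by
    rw [mul_add_one, exp_add]; ring
  refine ⟨integrable_of_mem_interior_integrableExpSet hμ, fun {s} hs ↦ ?_⟩
  have h_unique := setIntegral_eq_of_eventually_integral_mul_exp_eq
    (μ := μ) (ν := μ.map (· + 1)) (f := fun x ↦ a * x) (g := fun y ↦ b * (r - (y - 1))) ?_ ?_ ?_ hs
  · rw [setIntegral_map hs (by fun_prop) (by fun_prop), integral_const_mul, integral_const_mul]
      at h_unique
    simpa only [add_sub_cancel_right] using h_unique
  · filter_upwards [h_mul_exp] with θ hθ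
    simpa only [mul_assoc] using hθ.const_mul a
  · filter_upwards [h_exp, h_mul_exp] with θ hθ hθ'
    refine (integrable_map_measure (by fun_prop) (by fun_prop)).2 ?_
    simpa only [Function.comp_def, h_shift, Pi.sub_apply] using
      ((hθ.const_mul r).sub hθ').const_mul (b * exp θ)
  · filter_upwards [h_exp, h_mul_exp, h_ode] with θ hθ hθ' h_ode
    rw [integral_map (by fun_prop) (by fun_prop)]
    simp only [h_shift, mul_assoc a]
    rw [integral_const_mul, integral_const_mul, integral_sub (hθ.const_mul r) hθ',
      integral_const_mul]
    linear_combination h_ode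

lemma map_const_sub [IsFiniteMeasure μ] (h : BinomialRecurrence a b r μ) :
    BinomialRecurrence b a r (μ.map (r - ·)) where
  integrable_id := (integrable_map_measure (by fun_prop) (by fun_prop)).2
    ((integrable_const r).sub h.integrable_id)
  setIntegral_eq {s} hs := by
    have h_eq := h.setIntegral_eq (s := (fun x ↦ r - x + 1) ⁻¹' s) (by measurability)
    rw [setIntegral_map hs (by fun_prop) (by fun_prop),
      setIntegral_map (by measurability) (by fun_prop) (by fun_prop)]
    simpa [preimage_preimage, sub_add_eq_sub_sub, preimage] using h_eq.symm

lemma measure_Iio_eq_zero (h : BinomialRecurrence a b r μ) (ha : 0 < a) (hb : 0 ≤ b) :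
    μ (Iio (min 0 (r + 1))) = 0 := by
  set s := Iio (min 0 (r + 1))
  have h_neg : ∀ x ∈ s, x < 0 := fun x hx ↦ (lt_min_iff.1 hx).1
  have h_right : 0 ≤ ∫ x in (· + 1) ⁻¹' s, (r - x) ∂μ :=
    setIntegral_nonneg (by measurability) fun x (hx : x + 1 < _) ↦ by
      linarith [(lt_min_iff.1 hx).2]
  have h_left : 0 ≤ ∫ x in s, x ∂μ := by
    rw [← mul_nonneg_iff_of_pos_left ha, h.setIntegral_eq measurableSet_Iio]
    exact mul_nonneg hb h_right
  have h_ae : (fun x : ℝ ↦ -x) =ᵐ[μ.restrict s] 0 := by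
    refine (setIntegral_eq_zero_iff_of_nonneg_ae ?_ h.integrable_id.neg.integrableOn).1 ?_
    · exact ae_restrict_of_forall_mem measurableSet_Iio fun x hx ↦ neg_nonneg.2 (h_neg x hx).le
    · refine (integral_neg _).trans (neg_eq_zero.2 (h_left.antisymm' ?_))
      exact setIntegral_nonpos measurableSet_Iio fun x hx ↦ (h_neg x hx).le
  exact measure_eq_zero_of_ae_restrict_eq_zero measurableSet_Iio h_ae
    fun x hx ↦ neg_ne_zero.2 (h_neg x hx).ne

lemma measure_eq_zero_of_preimage_add_one (h : BinomialRecurrence a b r μ) (ha : a ≠ 0)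
    {s : Set ℝ} (hs : MeasurableSet s) (h0 : 0 ∉ s) (h_pre : μ ((· + 1) ⁻¹' s) = 0) :
    μ s = 0 := by
  have h_int (t : Set ℝ) (ht : MeasurableSet t) : ∫ x in t, x ∂μ.restrict s = 0 := by
    have h_null : μ ((· + 1) ⁻¹' (t ∩ s)) = 0 := measure_mono_null (fun x hx ↦ hx.2) h_pre
    have h_eq := h.setIntegral_eq (ht.inter hs)
    rw [setIntegral_measure_zero _ h_null, mul_zero] at h_eq
    rw [Measure.restrict_restrict ht]
    exact (mul_eq_zero.1 h_eq).resolve_left ha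
  have h_ae : (fun x : ℝ ↦ x) =ᵐ[μ.restrict s] 0 :=
    h.integrable_id.restrict.ae_eq_zero_of_forall_setIntegral_eq_zero fun t ht _ ↦ h_int t ht
  exact measure_eq_zero_of_ae_restrict_eq_zero hs h_ae fun x hx hx0 ↦ h0 (hx0 ▸ hx)

theorem ae_mem_range_natCast (h : BinomialRecurrence a b r μ) (ha : 0 < a) (hb : 0 ≤ b) :
    ∀ᵐ x ∂μ, x ∈ range ((↑) : ℕ → ℝ) := by
  set c := min 0 (r + 1)
  have h_null (n : ℕ) : μ (Iio (c + n) \ range ((↑) : ℕ → ℝ)) = 0 := by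
    induction n with
    | zero =>
      refine measure_mono_null sdiff_subset ?_
      simpa using h.measure_Iio_eq_zero ha hb
    | succ n ih =>
      refine h.measure_eq_zero_of_preimage_add_one ha.ne'
        (measurableSet_Iio.diff (countable_range _).measurableSet) (fun h0 ↦ h0.2 ⟨0, by simp⟩)
        (measure_mono_null ?_ ih)
      rintro x ⟨hx_lt, hx_nat⟩
      refine ⟨?_, fun ⟨k, hk⟩ ↦ hx_nat ⟨k + 1, by simp [hk]⟩⟩
      simp only [mem_Iio, Nat.cast_add, Nat.cast_one] at hx_lt ⊢
      linarith
  refine measure_mono_null (fun x hx ↦ ?_) (measure_iUnion_null h_null)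
  obtain ⟨n, hn⟩ := exists_nat_gt (x - c)
  exact mem_iUnion.2 ⟨n, by simpa using by linarith, hx⟩

theorem exists_eq_natCast [IsFiniteMeasure μ] [NeZero μ] (h : BinomialRecurrence a b r μ)
    (ha : 0 < a) (hb : 0 < b) : ∃ n : ℕ, r = n := by
  have h_nat : ∀ᵐ x ∂μ, x ∈ range ((↑) : ℕ → ℝ) := h.ae_mem_range_natCast ha hb.le
  have h_nat' : ∀ᵐ x ∂μ, r - x ∈ range ((↑) : ℕ → ℝ) :=
    ae_of_ae_map (by fun_prop) (h.map_const_sub.ae_mem_range_natCast hb ha.le)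
  obtain ⟨x, ⟨m, hm⟩, n, hn⟩ := (h_nat.and h_nat').exists
  exact ⟨m + n, by push_cast; linarith⟩

end BinomialRecurrence

theorem stmt3_general {a b r : ℝ} (ha : 0 < a) (hb : 0 < b) {μ : Measure ℝ}
    (hμ : 0 ∈ interior (integrableExpSet id μ))
    (h : mgf id μ =ᶠ[𝓝 0] fun θ ↦ (a + b * exp θ) ^ r) : ∃ n : ℕ, r = n := by
  have : IsFiniteMeasure μ := by
    have h0 : Integrable (fun x ↦ exp (0 * id x)) μ :=
      interior_subset (s := integrableExpSet id μ) hμ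
    simpa [integrable_const_iff_isFiniteMeasure] using h0
  have : NeZero μ := ⟨by
    rintro rfl
    have h0 : 0 < (a + b) ^ r := by positivity
    simpa [h0.ne] using h.self_of_nhds⟩
  exact (BinomialRecurrence.of_mgf_eventuallyEq (add_pos ha hb).ne' hμ h).exists_eq_natCast ha hb

end

/-- If `α₁, α₂ ≥ 0`, `α₁ + α₂ = 1`, `α₁ > 1/2`, `α₂ > 0`, `r > 0`, and
`(α₁ + α₂ exp θ)^r` is the Laplace transform of a probability measure on ℝ on a neighborhood
of 0, then `r` is a natural number. -/
theorem stmt3 (α₁ α₂ r : ℝ) (hα₁0 : 0 ≤ α₁) (hα₂0 : 0 < α₂)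
    (hsum : α₁ + α₂ = 1) (hα₁ : 1 / 2 < α₁) (hr : 0 < r)
    (μ : Measure ℝ) [IsProbabilityMeasure μ] (ε : ℝ) (hε : 0 < ε)
    (hint : ∀ θ : ℝ, |θ| < ε → Integrable (fun x => Real.exp (θ * x)) μ)
    (hlap : ∀ θ : ℝ, |θ| < ε →
        (α₁ + α₂ * Real.exp θ) ^ r = ∫ x, Real.exp (θ * x) ∂μ) :
    ∃ n : ℕ, r = n := by
  have hα₁_pos : 0 < α₁ := by linarith
  refine stmt3_general hα₁_pos hα₂0 (μ := μ) (mem_interior_iff_mem_nhds.2 ?_) ?_ <;>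
    filter_upwards [Metric.ball_mem_nhds 0 hε] with θ hθ
  exacts [hint θ (by simpa using hθ), (hlap θ (by simpa using hθ)).symm]
end

section
/- Let μ be a probability measure on ℝⁿ whose Laplace transform is finite on an open set Θ containing 0, and let X, Y be independent random vectors each distributed according to μ. Then for θ ∈ Θ with 2θ ∈ Θ(μ), E[X_1 exp⟨θ, X+Y⟩] = (∂k/∂θ_1)(θ)·L(θ)² where k = log L is the cumulant function, and consequently the conditional expectation identity E[(X_1 - Y_1)² - 2A·X_1Y_1 | X + Y] = a(X_1+Y_1) + b(X_2+Y_2) + 2e (a.s., for all such pairs) for n = 2 is equivalent to the PDE ∂²k/∂θ_1² = A(∂k/∂θ_1)² + a·∂k/∂θ_1 + b·∂k/∂θ_2 + e on the corresponding open set. -/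
open MeasureTheory ProbabilityTheory

/-- Partial derivative in the first coordinate. -/
noncomputable def pd1 (g : ℝ × ℝ → ℝ) : ℝ × ℝ → ℝ :=
  fun p => deriv (fun t => g (t, p.2)) p.1

/-- Partial derivative in the second coordinate. -/
noncomputable def pd2 (g : ℝ × ℝ → ℝ) : ℝ × ℝ → ℝ :=
  fun p => deriv (fun t => g (p.1, t)) p.2

/-!
Tilting `μ` by `exp ⟨θ, ·⟩` and normalising gives a probability measure `μ_θ` whose mean and
covariance are the first and second derivatives of `k = log L` at `θ`, and
`E[F(X, Y) exp ⟨θ, X + Y⟩] = L(θ)² ∫ F d(μ_θ ⊗ μ_θ)`. Weighting the difference of the two sides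
of the conditional expectation identity by `exp ⟨θ, X + Y⟩` and taking expectations therefore gives
`2 L(θ)²` times the difference of the two sides of the differential equation at `θ`. By uniqueness
of Laplace transforms, these weighted expectations vanish on a set of `θ` with nonempty interior
exactly when the conditional expectation identity holds.
-/

section LaplaceUniqueness

open Filter Topology NNReal

variable {Ω Ω' : Type*} {mΩ : MeasurableSpace Ω} {mΩ' : MeasurableSpace Ω'}
  {P : Measure Ω} {P' : Measure Ω'}

lemma eqOn_complexMGF_of_mgf_eventuallyEq {X : Ω → ℝ} {Y : Ω' → ℝ} {t : ℝ}
    (hX : t ∈ interior (integrableExpSet X P)) (hY : t ∈ interior (integrableExpSet Y P'))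
    (h : mgf X P =ᶠ[𝓝 t] mgf Y P') :
    Set.EqOn (complexMGF X P) (complexMGF Y P')
      {z | z.re ∈ interior (integrableExpSet X P) ∩ interior (integrableExpSet Y P')} := by
  have hXan := (analyticOnNhd_complexMGF (X := X) (μ := P)).mono
    fun z (hz : z.re ∈ _ ∩ interior (integrableExpSet Y P')) ↦ hz.1
  have hYan := (analyticOnNhd_complexMGF (X := Y) (μ := P')).mono
    fun z (hz : z.re ∈ interior (integrableExpSet X P) ∩ _) ↦ hz.2
  have hconv := convex_integrableExpSet.interior.inter convex_integrableExpSet.interior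
    (s := interior (integrableExpSet X P)) (t := interior (integrableExpSet Y P'))
  refine hXan.eqOn_of_preconnected_of_frequently_eq hYan
    (hconv.linear_preimage Complex.reLm).isPreconnected
    (z₀ := (t : ℂ)) (by simpa using ⟨hX, hY⟩) ?_
  have hofReal : Tendsto ((↑) : ℝ → ℂ) (𝓝[≠] t) (𝓝[≠] (t : ℂ)) :=
    Complex.continuous_ofReal.continuousAt.continuousWithinAt.tendsto_nhdsWithin
      fun s hs ↦ by simpa using hs
  refine hofReal.frequently (Eventually.frequently ?_)
  filter_upwards [nhdsWithin_le_nhds h] with s hs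
  rw [complexMGF_ofReal, complexMGF_ofReal, hs]

lemma mgf_withDensity {w : Ω → ℝ≥0} (hw : AEMeasurable w P) (X : Ω → ℝ) (t : ℝ) :
    mgf X (P.withDensity fun ω ↦ w ω) t = ∫ ω, w ω * Real.exp (t * X ω) ∂P :=
  integral_withDensity_eq_integral_smul₀ hw _

lemma mem_integrableExpSet_withDensity_iff {w : Ω → ℝ≥0} (hw : AEMeasurable w P)
    {X : Ω → ℝ} {t : ℝ} :
    t ∈ integrableExpSet X (P.withDensity fun ω ↦ w ω) ↔
      Integrable (fun ω ↦ w ω * Real.exp (t * X ω)) P :=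
  integrable_withDensity_iff_integrable_smul₀ hw

lemma condExp_mul_comp_comap {E : Type*} [MeasurableSpace E] {S : Ω → E} {f : Ω → ℝ} {φ : E → ℝ}
    (hφ : Measurable φ) (hf : Integrable f P) (hfφ : Integrable (fun ω ↦ f ω * φ (S ω)) P) :
    P[fun ω ↦ f ω * φ (S ω) | MeasurableSpace.comap S inferInstance] =ᵐ[P]
      fun ω ↦ (P[f | MeasurableSpace.comap S inferInstance]) ω * φ (S ω) :=
  condExp_mul_of_stronglyMeasurable_right
    (hφ.comp (comap_measurable S)).stronglyMeasurable hfφ hf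

variable {E : Type*} [NormedAddCommGroup E] [NormedSpace ℝ E] [CompleteSpace E]
  [SecondCountableTopology E] [MeasurableSpace E] [BorelSpace E]

lemma map_eq_map_of_mgf_eventuallyEq [IsFiniteMeasure P] [IsFiniteMeasure P']
    {S : Ω → E} {S' : Ω' → E} (hS : AEMeasurable S P) (hS' : AEMeasurable S' P')
    (hint : ∀ l : StrongDual ℝ E, 0 ∈ interior (integrableExpSet (fun ω ↦ l (S ω)) P))
    (hint' : ∀ l : StrongDual ℝ E, 0 ∈ interior (integrableExpSet (fun ω ↦ l (S' ω)) P'))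
    (h : ∀ l : StrongDual ℝ E,
      mgf (fun ω ↦ l (S ω)) P =ᶠ[𝓝 0] mgf (fun ω ↦ l (S' ω)) P') :
    P.map S = P'.map S' := by
  refine Measure.ext_of_charFunDual (funext fun l ↦ ?_)
  have hI := eqOn_complexMGF_of_mgf_eventuallyEq (hint l) (hint' l) (h l)
    (x := Complex.I) (by simpa using ⟨hint l, hint' l⟩)
  rw [charFunDual_apply, charFunDual_apply, integral_map hS (by fun_prop),
    integral_map hS' (by fun_prop)]
  simpa only [complexMGF, mul_comm Complex.I] using hI

-- The positive and negative parts of `h` are the densities of two finite measures whose images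
-- under `S` have the same Laplace transform near `0`.
lemma map_withDensity_posPart_eq_negPart {S : Ω → E} (hS : AEMeasurable S P) {h : Ω → ℝ}
    (hint : ∀ l : StrongDual ℝ E, ∀ᶠ t : ℝ in 𝓝 0,
      Integrable (fun ω ↦ h ω * Real.exp (t * l (S ω))) P)
    (hzero : ∀ l : StrongDual ℝ E, ∀ᶠ t : ℝ in 𝓝 0,
      ∫ ω, h ω * Real.exp (t * l (S ω)) ∂P = 0) :
    (P.withDensity fun ω ↦ ENNReal.ofReal (h ω)).map S =
      (P.withDensity fun ω ↦ ENNReal.ofReal (-h ω)).map S := by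
  have hh : Integrable h P := by simpa using (hint 0).self_of_nhds
  have := isFiniteMeasure_withDensity_ofReal hh.2
  have := isFiniteMeasure_withDensity_ofReal hh.neg.2
  have hpos_meas : AEMeasurable (fun ω ↦ (h ω).toNNReal) P := hh.aemeasurable.real_toNNReal
  have hneg_meas : AEMeasurable (fun ω ↦ (-h ω).toNNReal) P := hh.aemeasurable.neg.real_toNNReal
  have hpos_int : ∀ l : StrongDual ℝ E, ∀ᶠ t : ℝ in 𝓝 0,
      Integrable (fun ω ↦ (h ω).toNNReal * Real.exp (t * l (S ω))) P := fun l ↦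
    (hint l).mono fun t ht ↦ by
      simpa [max_mul_of_nonneg, Real.exp_nonneg] using ht.pos_part
  have hneg_int : ∀ l : StrongDual ℝ E, ∀ᶠ t : ℝ in 𝓝 0,
      Integrable (fun ω ↦ (-h ω).toNNReal * Real.exp (t * l (S ω))) P := fun l ↦
    (hint l).mono fun t ht ↦ by
      simpa [max_mul_of_nonneg, Real.exp_nonneg] using ht.neg_part
  refine map_eq_map_of_mgf_eventuallyEq (hS.mono_ac (withDensity_absolutelyContinuous _ _))
    (hS.mono_ac (withDensity_absolutelyContinuous _ _))
    (fun l ↦ mem_interior_iff_mem_nhds.2 ?_) (fun l ↦ mem_interior_iff_mem_nhds.2 ?_) fun l ↦ ?_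
  · exact (hpos_int l).mono fun t ↦ (mem_integrableExpSet_withDensity_iff hpos_meas).2
  · exact (hneg_int l).mono fun t ↦ (mem_integrableExpSet_withDensity_iff hneg_meas).2
  · filter_upwards [hpos_int l, hneg_int l, hzero l] with t hpos hneg hdiff
    refine (mgf_withDensity hpos_meas _ t).trans
      (Eq.trans ?_ (mgf_withDensity hneg_meas _ t).symm)
    rw [← sub_eq_zero, ← integral_sub hpos hneg, ← hdiff]
    simp only [← sub_mul, Real.coe_toNNReal', max_zero_sub_max_neg_zero_eq_self]

lemma condExp_comap_ae_eq_zero [IsFiniteMeasure P] {S : Ω → E} (hS : Measurable S) {h : Ω → ℝ}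
    (hint : ∀ l : StrongDual ℝ E, ∀ᶠ t : ℝ in 𝓝 0,
      Integrable (fun ω ↦ h ω * Real.exp (t * l (S ω))) P)
    (hzero : ∀ l : StrongDual ℝ E, ∀ᶠ t : ℝ in 𝓝 0,
      ∫ ω, h ω * Real.exp (t * l (S ω)) ∂P = 0) :
    P[h | MeasurableSpace.comap S inferInstance] =ᵐ[P] 0 := by
  have hh : Integrable h P := by simpa using (hint 0).self_of_nhds
  refine (ae_eq_condExp_of_forall_setIntegral_eq hS.comap_le hh (fun _ _ _ ↦ integrableOn_zero)
    ?_ aestronglyMeasurable_zero).symm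
  rintro _ ⟨C, hC, rfl⟩ -
  have hparts := congrArg (fun m ↦ m C)
    (map_withDensity_posPart_eq_negPart hS.aemeasurable hint hzero)
  simp only [Measure.map_apply hS hC, withDensity_apply _ (hS hC)] at hparts
  simp [integral_eq_lintegral_pos_part_sub_lintegral_neg_part hh.integrableOn, hparts]

variable {T : Type*} [AddCommGroup T] [Module ℝ T] [TopologicalSpace T] [ContinuousAdd T]
  [ContinuousSMul ℝ T]

lemma eventually_add_smul_mem {U : Set T} {θ : T} (hθ : θ ∈ interior U) (u : T) :
    ∀ᶠ t : ℝ in 𝓝 0, θ + t • u ∈ interior U := by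
  have hline : Continuous fun t : ℝ ↦ θ + t • u := by fun_prop
  exact hline.continuousAt.eventually_mem (isOpen_interior.mem_nhds (by simpa using hθ))

theorem condExp_comap_ae_eq_iff_integral_mul_exp [IsFiniteMeasure P]
    {B : T →ₗ[ℝ] StrongDual ℝ E} (hB : Function.Surjective B) {S : Ω → E} (hS : Measurable S)
    {f g : Ω → ℝ} (hf : Integrable f P) (hg : Integrable g P)
    (hgm : StronglyMeasurable[MeasurableSpace.comap S inferInstance] g)
    {U : Set T} (hU : (interior U).Nonempty)
    (hfU : ∀ θ ∈ U, Integrable (fun ω ↦ f ω * Real.exp (B θ (S ω))) P)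
    (hgU : ∀ θ ∈ U, Integrable (fun ω ↦ g ω * Real.exp (B θ (S ω))) P) :
    P[f | MeasurableSpace.comap S inferInstance] =ᵐ[P] g ↔
      ∀ θ ∈ U, ∫ ω, f ω * Real.exp (B θ (S ω)) ∂P = ∫ ω, g ω * Real.exp (B θ (S ω)) ∂P := by
  have hexp_meas (θ : T) : Measurable fun x ↦ Real.exp (B θ x) := by fun_prop
  refine ⟨fun h θ hθ ↦ ?_, fun h ↦ ?_⟩
  · rw [← integral_condExp hS.comap_le]
    refine integral_congr_ae ((condExp_mul_comp_comap (hexp_meas θ) hf (hfU θ hθ)).trans ?_)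
    filter_upwards [h] with ω hω
    rw [hω]
  obtain ⟨θ₀, hθ₀⟩ := hU
  have hint : ∀ θ ∈ interior U,
      Integrable (fun ω ↦ (f ω - g ω) * Real.exp (B θ (S ω))) P := fun θ hθ ↦ by
    simp only [sub_mul]
    exact (hfU θ (interior_subset hθ)).sub (hgU θ (interior_subset hθ))
  have hzero : ∀ θ ∈ interior U, ∫ ω, (f ω - g ω) * Real.exp (B θ (S ω)) ∂P = 0 := fun θ hθ ↦ by
    simp only [sub_mul]
    rw [integral_sub (hfU θ (interior_subset hθ)) (hgU θ (interior_subset hθ)),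
      h θ (interior_subset hθ), sub_self]
  -- Weighting `f - g` by `exp ∘ B θ₀ ∘ S` moves the base point `θ₀` to `0`.
  have hshift (u : T) (t : ℝ) (ω : Ω) :
      (f ω - g ω) * Real.exp (B θ₀ (S ω)) * Real.exp (t * B u (S ω)) =
        (f ω - g ω) * Real.exp (B (θ₀ + t • u) (S ω)) := by
    rw [mul_assoc, ← Real.exp_add]
    simp
  have hweighted : P[fun ω ↦ (f ω - g ω) * Real.exp (B θ₀ (S ω)) |
      MeasurableSpace.comap S inferInstance] =ᵐ[P] 0 := by
    refine condExp_comap_ae_eq_zero hS (hB.forall.2 fun u ↦ ?_) (hB.forall.2 fun u ↦ ?_) <;>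
      simp only [hshift]
    · exact (eventually_add_smul_mem hθ₀ u).mono fun t ↦ hint _
    · exact (eventually_add_smul_mem hθ₀ u).mono fun t ↦ hzero _
  filter_upwards [hweighted, condExp_sub hf hg _,
    condExp_mul_comp_comap (hexp_meas θ₀) (hf.sub hg) (hint θ₀ hθ₀)] with ω hω hsub hpull
  have hprod : (P[f | MeasurableSpace.comap S inferInstance] ω - g ω)
      * Real.exp (B θ₀ (S ω)) = 0 := by
    rw [condExp_of_stronglyMeasurable hS.comap_le hgm hg] at hsub
    exact (hω.symm.trans (hpull.trans (congrArg (· * _) hsub))).symm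
  exact sub_eq_zero.1 ((mul_eq_zero.1 hprod).resolve_right (Real.exp_ne_zero _))

end LaplaceUniqueness

section ExponentialFamily

open Filter Topology

lemma tilted_prod {α β : Type*} [MeasurableSpace α] [MeasurableSpace β] {μ : Measure α}
    {ν : Measure β} [SFinite μ] [SFinite ν] {f : α → ℝ} {g : β → ℝ}
    (hf : AEMeasurable f μ) (hg : AEMeasurable g ν) :
    (μ.tilted f).prod (ν.tilted g) = (μ.prod ν).tilted fun z ↦ f z.1 + g z.2 := by
  rw [Measure.tilted, Measure.tilted, Measure.tilted,
    prod_withDensity₀ (by fun_prop) (by fun_prop)]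
  congr 1 with z
  rw [← ENNReal.ofReal_mul (by positivity)]
  simp only [Real.exp_add, integral_prod_mul (fun x ↦ Real.exp (f x)) (fun y ↦ Real.exp (g y)),
    mul_div_mul_comm]

variable {T E : Type*} [AddCommGroup T] [Module ℝ T] [NormedAddCommGroup E] [NormedSpace ℝ E]
  [MeasurableSpace E]

/-- The Laplace transform `θ ↦ ∫ exp ⟨θ, x⟩ dμ` of a measure on `E`. The parameter space `T` is
paired with `E` by `⟨θ, x⟩ = B θ x`. Off `laplaceDomain B μ` the value is the junk value `0`. -/
noncomputable def laplaceTransform (B : T →ₗ[ℝ] StrongDual ℝ E) (μ : Measure E) (θ : T) : ℝ :=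
  ∫ x, Real.exp (B θ x) ∂μ

/-- The set of parameters at which the Laplace transform is finite. -/
def laplaceDomain (B : T →ₗ[ℝ] StrongDual ℝ E) (μ : Measure E) : Set T :=
  {θ | Integrable (fun x ↦ Real.exp (B θ x)) μ}

/-- The cumulant function `k = log L`, where `L` is the Laplace transform. -/
noncomputable def cumulantFun (B : T →ₗ[ℝ] StrongDual ℝ E) (μ : Measure E) (θ : T) : ℝ :=
  Real.log (laplaceTransform B μ θ)

variable {B : T →ₗ[ℝ] StrongDual ℝ E} {μ : Measure E} {θ : T}

lemma laplaceTransform_pos [NeZero μ] (hθ : θ ∈ laplaceDomain B μ) : 0 < laplaceTransform B μ θ :=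
  integral_exp_pos hθ

lemma isProbabilityMeasure_tilted_of_mem [NeZero μ] (hθ : θ ∈ laplaceDomain B μ) :
    IsProbabilityMeasure (μ.tilted (B θ)) :=
  isProbabilityMeasure_tilted hθ

lemma mem_integrableExpSet_tilted_iff (hθ : θ ∈ laplaceDomain B μ) (u : T) (t : ℝ) :
    t ∈ integrableExpSet (B u) (μ.tilted (B θ)) ↔ θ + t • u ∈ laplaceDomain B μ := by
  simp only [integrableExpSet, laplaceDomain, Set.mem_ofPred_eq, integrable_tilted_iff hθ,
    smul_eq_mul, ← Real.exp_add]
  simp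

lemma mgf_tilted (u : T) (t : ℝ) :
    mgf (B u) (μ.tilted (B θ)) t =
      laplaceTransform B μ (θ + t • u) / laplaceTransform B μ θ := by
  simp [mgf, laplaceTransform, integral_exp_tilted (B θ) fun x ↦ t * B u x]

lemma cumulantFun_add_smul [NeZero μ] {u : T} {t : ℝ} (hθ : θ ∈ laplaceDomain B μ)
    (hθt : θ + t • u ∈ laplaceDomain B μ) :
    cumulantFun B μ (θ + t • u) = cumulantFun B μ θ + cgf (B u) (μ.tilted (B θ)) t := by
  rw [cgf, mgf_tilted, Real.log_div (laplaceTransform_pos hθt).ne' (laplaceTransform_pos hθ).ne',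
    cumulantFun, cumulantFun, add_sub_cancel]

section Interior

variable [TopologicalSpace T] [ContinuousAdd T] [ContinuousSMul ℝ T]

lemma zero_mem_interior_integrableExpSet_tilted
    (hθ : θ ∈ interior (laplaceDomain B μ)) (u : T) :
    0 ∈ interior (integrableExpSet (B u) (μ.tilted (B θ))) := by
  refine mem_interior_iff_mem_nhds.2 ?_
  filter_upwards [eventually_add_smul_mem hθ u] with t ht
  exact (mem_integrableExpSet_tilted_iff (interior_subset hθ) u t).2 (interior_subset ht)

lemma cumulantFun_add_smul_eventuallyEq [NeZero μ]
    (hθ : θ ∈ interior (laplaceDomain B μ)) (u : T) :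
    (fun t : ℝ ↦ cumulantFun B μ (θ + t • u)) =ᶠ[𝓝 0]
      fun t ↦ cumulantFun B μ θ + cgf (B u) (μ.tilted (B θ)) t :=
  (eventually_add_smul_mem hθ u).mono fun _ ht ↦
    cumulantFun_add_smul (interior_subset hθ) (interior_subset ht)

lemma memLp_tilted [NeZero μ] (hθ : θ ∈ interior (laplaceDomain B μ)) (u : T)
    (p : NNReal) : MemLp (B u) p (μ.tilted (B θ)) := by
  have := isProbabilityMeasure_tilted_of_mem (interior_subset hθ)
  simpa using memLp_tilted_mul (zero_mem_interior_integrableExpSet_tilted hθ u) p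

theorem lineDeriv_cumulantFun [NeZero μ] (hθ : θ ∈ interior (laplaceDomain B μ)) (u : T) :
    lineDeriv ℝ (cumulantFun B μ) θ u = ∫ x, B u x ∂μ.tilted (B θ) := by
  have := isProbabilityMeasure_tilted_of_mem (interior_subset hθ)
  rw [lineDeriv, (cumulantFun_add_smul_eventuallyEq hθ u).deriv_eq, deriv_const_add,
    deriv_cgf_zero (zero_mem_interior_integrableExpSet_tilted hθ u)]
  simp

lemma lineDeriv_cumulantFun_add_smul [NeZero μ]
    (hθ : θ ∈ interior (laplaceDomain B μ)) (u v : T) (a b : ℝ) :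
    lineDeriv ℝ (cumulantFun B μ) θ (a • u + b • v) =
      a * lineDeriv ℝ (cumulantFun B μ) θ u + b * lineDeriv ℝ (cumulantFun B μ) θ v := by
  have hint (u : T) : Integrable (B u) (μ.tilted (B θ)) :=
    have := isProbabilityMeasure_tilted_of_mem (interior_subset hθ)
    (memLp_tilted hθ u 1).integrable le_rfl
  rw [lineDeriv_cumulantFun hθ, lineDeriv_cumulantFun hθ, lineDeriv_cumulantFun hθ,
    ← integral_const_mul, ← integral_const_mul,
    ← integral_add ((hint u).const_mul a) ((hint v).const_mul b)]
  simp

theorem lineDeriv_lineDeriv_cumulantFun [NeZero μ]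
    (hθ : θ ∈ interior (laplaceDomain B μ)) (u : T) :
    lineDeriv ℝ (fun η ↦ lineDeriv ℝ (cumulantFun B μ) η u) θ u = Var[B u; μ.tilted (B θ)] := by
  have := isProbabilityMeasure_tilted_of_mem (interior_subset hθ)
  have hline (t : ℝ) : lineDeriv ℝ (cumulantFun B μ) (θ + t • u) u =
      deriv (fun s : ℝ ↦ cumulantFun B μ (θ + s • u)) t := by
    simpa [lineDeriv, add_smul, add_assoc] using
      deriv_comp_const_add (fun s : ℝ ↦ cumulantFun B μ (θ + s • u)) t 0
  calc lineDeriv ℝ (fun η ↦ lineDeriv ℝ (cumulantFun B μ) η u) θ u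
      = iteratedDeriv 2 (fun t : ℝ ↦ cumulantFun B μ (θ + t • u)) 0 := by
        rw [lineDeriv]
        simp only [hline, iteratedDeriv_succ, iteratedDeriv_zero]
    _ = iteratedDeriv 2 (cgf (B u) (μ.tilted (B θ))) 0 := by
        rw [(cumulantFun_add_smul_eventuallyEq hθ u).iteratedDeriv_eq 2,
          iteratedDeriv_const_add zero_lt_two]
    _ = Var[B u; μ.tilted (B θ)] := by
        rw [← variance_tilted_mul (zero_mem_interior_integrableExpSet_tilted hθ u)]
        simp

end Interior

section Pairs

variable {Ω : Type*} {mΩ : MeasurableSpace Ω} {P : Measure Ω} {ν : Measure E}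
  {Z : Ω → E × E}

lemma integrable_exp_add (hμ : θ ∈ laplaceDomain B μ) (hν : θ ∈ laplaceDomain B ν) :
    Integrable (fun z ↦ Real.exp (B θ (z.1 + z.2))) (μ.prod ν) := by
  simpa only [map_add, Real.exp_add] using Integrable.mul_prod hμ hν

lemma integral_exp_add [SFinite μ] [SFinite ν] :
    ∫ z, Real.exp (B θ (z.1 + z.2)) ∂μ.prod ν =
      laplaceTransform B μ θ * laplaceTransform B ν θ := by
  simpa only [map_add, Real.exp_add, laplaceTransform] using
    integral_prod_mul (μ := μ) (ν := ν) (fun x ↦ Real.exp (B θ x)) (fun y ↦ Real.exp (B θ y))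

variable [BorelSpace E] [SFinite μ] [SFinite ν]

lemma tilted_prod_tilted :
    (μ.tilted (B θ)).prod (ν.tilted (B θ)) =
      (μ.prod ν).tilted fun z ↦ B θ (z.1 + z.2) := by
  simp only [tilted_prod (μ := μ) (ν := ν) (f := B θ) (g := B θ) (by fun_prop) (by fun_prop),
    map_add]

lemma integrable_comp_mul_exp_add (hZ : HasLaw Z (μ.prod ν) P) {F : E × E → ℝ}
    (hF : Integrable F ((μ.tilted (B θ)).prod (ν.tilted (B θ))))
    (hμ : θ ∈ laplaceDomain B μ) (hν : θ ∈ laplaceDomain B ν) :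
    Integrable (fun ω ↦ F (Z ω) * Real.exp (B θ ((Z ω).1 + (Z ω).2))) P := by
  rw [tilted_prod_tilted, integrable_tilted_iff (integrable_exp_add hμ hν), ← hZ.map_eq] at hF
  simpa [Function.comp_def, mul_comm] using hF.comp_aemeasurable hZ.aemeasurable

theorem integral_comp_mul_exp_add [SecondCountableTopology E] [NeZero μ] [NeZero ν]
    (hZ : HasLaw Z (μ.prod ν) P) {F : E × E → ℝ} (hF : Measurable F)
    (hμ : θ ∈ laplaceDomain B μ) (hν : θ ∈ laplaceDomain B ν) :
    ∫ ω, F (Z ω) * Real.exp (B θ ((Z ω).1 + (Z ω).2)) ∂P =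
      laplaceTransform B μ θ * laplaceTransform B ν θ *
        ∫ z, F z ∂(μ.tilted (B θ)).prod (ν.tilted (B θ)) := by
  have hLμ := laplaceTransform_pos hμ
  have hLν := laplaceTransform_pos hν
  calc ∫ ω, F (Z ω) * Real.exp (B θ ((Z ω).1 + (Z ω).2)) ∂P
      = ∫ z, F z * Real.exp (B θ (z.1 + z.2)) ∂μ.prod ν :=
        hZ.integral_comp (f := fun z ↦ F z * Real.exp (B θ (z.1 + z.2))) (by fun_prop)
    _ = _ := by
        rw [tilted_prod_tilted, integral_tilted, integral_exp_add, ← integral_const_mul]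
        refine integral_congr_ae (ae_of_all _ fun z ↦ ?_)
        simp only [smul_eq_mul]
        field_simp

end Pairs

end ExponentialFamily

section IndependentCopies

lemma integrable_sq_sub_sub_mul {α : Type*} [MeasurableSpace α] {ν : Measure α}
    [IsFiniteMeasure ν] {l : α → ℝ} (hl : MemLp l 2 ν) (A : ℝ) :
    Integrable (fun z : α × α ↦ (l z.1 - l z.2) ^ 2 - 2 * A * l z.1 * l z.2) (ν.prod ν) := by
  have hprod := (hl.integrable one_le_two).mul_prod (hl.integrable one_le_two)
  simp only [mul_assoc]
  exact ((hl.comp_fst ν).sub (hl.comp_snd ν)).integrable_sq.sub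
    ((hprod.const_mul A).const_mul 2)

lemma integral_sq_sub_sub_mul {α : Type*} [MeasurableSpace α] {ν : Measure α}
    [IsProbabilityMeasure ν] {l : α → ℝ} (hl : MemLp l 2 ν) (A : ℝ) :
    ∫ z : α × α, (l z.1 - l z.2) ^ 2 - 2 * A * l z.1 * l z.2 ∂ν.prod ν =
      2 * (Var[l; ν] - A * (∫ x, l x ∂ν) ^ 2) := by
  have hsq := hl.integrable_sq
  have hadd : Integrable (fun z : α × α ↦ l z.1 ^ 2 + l z.2 ^ 2) (ν.prod ν) :=
    (hsq.comp_fst ν).add (hsq.comp_snd ν)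
  have hmul := (hl.integrable one_le_two).mul_prod (hl.integrable one_le_two)
  calc ∫ z : α × α, (l z.1 - l z.2) ^ 2 - 2 * A * l z.1 * l z.2 ∂ν.prod ν
      = ∫ z : α × α, l z.1 ^ 2 + l z.2 ^ 2 - 2 * (1 + A) * (l z.1 * l z.2) ∂ν.prod ν := by
        congr 1 with z
        ring
    _ = ∫ x, l x ^ 2 ∂ν + ∫ x, l x ^ 2 ∂ν
          - 2 * (1 + A) * ((∫ x, l x ∂ν) * ∫ x, l x ∂ν) := by
        rw [integral_sub hadd (hmul.const_mul _),
          integral_add (hsq.comp_fst ν) (hsq.comp_snd ν), integral_const_mul, integral_prod_mul,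
          integral_fun_fst fun x ↦ l x ^ 2, integral_fun_snd fun x ↦ l x ^ 2]
        simp
    _ = 2 * (Var[l; ν] - A * (∫ x, l x ∂ν) ^ 2) := by
        rw [variance_eq_sub hl]
        simp only [Pi.pow_apply]
        ring

lemma integrable_comp_add_add_const {E : Type*} [NormedAddCommGroup E] [NormedSpace ℝ E]
    [MeasurableSpace E] {ν : Measure E} [IsFiniteMeasure ν] {l : StrongDual ℝ E}
    (hl : Integrable l ν) (c : ℝ) :
    Integrable (fun z : E × E ↦ l (z.1 + z.2) + c) (ν.prod ν) := by
  simp only [map_add]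
  exact ((hl.comp_fst ν).add (hl.comp_snd ν)).add (integrable_const c)

lemma integral_comp_add_add_const {E : Type*} [NormedAddCommGroup E] [NormedSpace ℝ E]
    [MeasurableSpace E] {ν : Measure E} [IsProbabilityMeasure ν] {l : StrongDual ℝ E}
    (hl : Integrable l ν) (c : ℝ) :
    ∫ z : E × E, l (z.1 + z.2) + c ∂ν.prod ν = 2 * ∫ x, l x ∂ν + c := by
  have hadd : Integrable (fun z : E × E ↦ l z.1 + l z.2) (ν.prod ν) :=
    (hl.comp_fst ν).add (hl.comp_snd ν)
  simp only [map_add]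
  rw [integral_add hadd (integrable_const c), integral_add (hl.comp_fst ν) (hl.comp_snd ν),
    integral_fun_fst, integral_fun_snd]
  simp [two_mul]

end IndependentCopies

section CumulantEquation

variable {Ω T E : Type*} {mΩ : MeasurableSpace Ω} {P : Measure Ω} [AddCommGroup T] [Module ℝ T]
  [TopologicalSpace T] [ContinuousAdd T] [ContinuousSMul ℝ T] [NormedAddCommGroup E]
  [NormedSpace ℝ E] [MeasurableSpace E] [BorelSpace E]
  {B : T →ₗ[ℝ] StrongDual ℝ E} {μ : Measure E} {Z : Ω → E × E} {θ : T}

section WeightedIntegrals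

variable [SFinite μ] [NeZero μ]

lemma integrable_sq_sub_sub_mul_mul_exp_add (hZ : HasLaw Z (μ.prod μ) P)
    (hθ : θ ∈ interior (laplaceDomain B μ)) (u : T) (A : ℝ) :
    Integrable (fun ω ↦ ((B u (Z ω).1 - B u (Z ω).2) ^ 2 - 2 * A * B u (Z ω).1 * B u (Z ω).2)
      * Real.exp (B θ ((Z ω).1 + (Z ω).2))) P := by
  have := isProbabilityMeasure_tilted_of_mem (interior_subset hθ)
  exact integrable_comp_mul_exp_add hZ (integrable_sq_sub_sub_mul (memLp_tilted hθ u 2) A)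
    (interior_subset hθ) (interior_subset hθ)

lemma integrable_add_const_mul_exp_add (hZ : HasLaw Z (μ.prod μ) P)
    (hθ : θ ∈ interior (laplaceDomain B μ)) (w : T) (c : ℝ) :
    Integrable (fun ω ↦ (B w ((Z ω).1 + (Z ω).2) + c) * Real.exp (B θ ((Z ω).1 + (Z ω).2))) P := by
  have := isProbabilityMeasure_tilted_of_mem (interior_subset hθ)
  have hw := (memLp_tilted hθ w 1).integrable le_rfl
  exact integrable_comp_mul_exp_add hZ (integrable_comp_add_add_const hw c)
    (interior_subset hθ) (interior_subset hθ)

variable [SecondCountableTopology E]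

lemma integral_fst_mul_exp_add (hZ : HasLaw Z (μ.prod μ) P)
    (hθ : θ ∈ interior (laplaceDomain B μ)) (u : T) :
    ∫ ω, B u (Z ω).1 * Real.exp (B θ ((Z ω).1 + (Z ω).2)) ∂P =
      lineDeriv ℝ (cumulantFun B μ) θ u * laplaceTransform B μ θ ^ 2 := by
  have := isProbabilityMeasure_tilted_of_mem (interior_subset hθ)
  rw [integral_comp_mul_exp_add hZ (F := fun z ↦ B u z.1) (by fun_prop) (interior_subset hθ)
    (interior_subset hθ), integral_fun_fst, lineDeriv_cumulantFun hθ]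
  simp only [probReal_univ, one_smul]
  ring

lemma integral_sq_sub_sub_mul_mul_exp_add (hZ : HasLaw Z (μ.prod μ) P)
    (hθ : θ ∈ interior (laplaceDomain B μ)) (u : T) (A : ℝ) :
    ∫ ω, ((B u (Z ω).1 - B u (Z ω).2) ^ 2 - 2 * A * B u (Z ω).1 * B u (Z ω).2)
      * Real.exp (B θ ((Z ω).1 + (Z ω).2)) ∂P =
      2 * laplaceTransform B μ θ ^ 2 *
        (lineDeriv ℝ (fun η ↦ lineDeriv ℝ (cumulantFun B μ) η u) θ u
          - A * lineDeriv ℝ (cumulantFun B μ) θ u ^ 2) := by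
  have := isProbabilityMeasure_tilted_of_mem (interior_subset hθ)
  rw [integral_comp_mul_exp_add hZ
      (F := fun z ↦ (B u z.1 - B u z.2) ^ 2 - 2 * A * B u z.1 * B u z.2) (by fun_prop)
      (interior_subset hθ) (interior_subset hθ),
    integral_sq_sub_sub_mul (memLp_tilted hθ u 2), lineDeriv_lineDeriv_cumulantFun hθ,
    lineDeriv_cumulantFun hθ]
  ring

lemma integral_add_const_mul_exp_add (hZ : HasLaw Z (μ.prod μ) P)
    (hθ : θ ∈ interior (laplaceDomain B μ)) (w : T) (e : ℝ) :
    ∫ ω, (B w ((Z ω).1 + (Z ω).2) + 2 * e) * Real.exp (B θ ((Z ω).1 + (Z ω).2)) ∂P =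
      2 * laplaceTransform B μ θ ^ 2 * (lineDeriv ℝ (cumulantFun B μ) θ w + e) := by
  have := isProbabilityMeasure_tilted_of_mem (interior_subset hθ)
  have hw := (memLp_tilted hθ w 1).integrable le_rfl
  rw [integral_comp_mul_exp_add hZ (F := fun z ↦ B w (z.1 + z.2) + 2 * e) (by fun_prop)
      (interior_subset hθ) (interior_subset hθ),
    integral_comp_add_add_const hw, lineDeriv_cumulantFun hθ]
  ring

end WeightedIntegrals

variable [SecondCountableTopology E] [CompleteSpace E]

theorem condExp_sq_sub_sub_mul_ae_eq_iff [IsFiniteMeasure μ] [NeZero μ]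
    (hB : Function.Surjective B) (hZm : Measurable Z) (hZ : HasLaw Z (μ.prod μ) P)
    (h0 : 0 ∈ interior (laplaceDomain B μ))
    {U : Set T} (hU : U ⊆ interior (laplaceDomain B μ)) (hU' : (interior U).Nonempty)
    (u w : T) (A e : ℝ) :
    P[fun ω ↦ (B u (Z ω).1 - B u (Z ω).2) ^ 2 - 2 * A * B u (Z ω).1 * B u (Z ω).2 |
        MeasurableSpace.comap (fun ω ↦ (Z ω).1 + (Z ω).2) inferInstance]
          =ᵐ[P] (fun ω ↦ B w ((Z ω).1 + (Z ω).2) + 2 * e) ↔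
      ∀ θ ∈ U, lineDeriv ℝ (fun η ↦ lineDeriv ℝ (cumulantFun B μ) η u) θ u =
        A * lineDeriv ℝ (cumulantFun B μ) θ u ^ 2 + lineDeriv ℝ (cumulantFun B μ) θ w + e := by
  have := hZ.isFiniteMeasure
  have hS : Measurable fun ω ↦ (Z ω).1 + (Z ω).2 := by fun_prop
  rw [condExp_comap_ae_eq_iff_integral_mul_exp hB hS
    (g := fun ω ↦ B w ((Z ω).1 + (Z ω).2) + 2 * e)
    (by simpa using integrable_sq_sub_sub_mul_mul_exp_add hZ h0 u A)
    (by simpa using integrable_add_const_mul_exp_add hZ h0 w (2 * e))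
    (Measurable.stronglyMeasurable
      (((B w).measurable.comp (comap_measurable _)).add_const _)) hU'
    (fun θ hθ ↦ integrable_sq_sub_sub_mul_mul_exp_add hZ (hU hθ) u A)
    (fun θ hθ ↦ integrable_add_const_mul_exp_add hZ (hU hθ) w (2 * e))]
  refine forall₂_congr fun θ hθ ↦ ?_
  have hL : 2 * laplaceTransform B μ θ ^ 2 ≠ 0 :=
    mul_ne_zero two_ne_zero (pow_ne_zero 2 (laplaceTransform_pos (interior_subset (hU hθ))).ne')
  rw [integral_sq_sub_sub_mul_mul_exp_add hZ (hU hθ), integral_add_const_mul_exp_add hZ (hU hθ),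
    mul_right_inj' hL, sub_eq_iff_eq_add', add_assoc]

theorem stmt18_general [IsProbabilityMeasure μ] {X Y : Ω → E}
    (hX : Measurable X) (hY : Measurable Y) (hindep : IndepFun X Y P)
    (hXlaw : P.map X = μ) (hYlaw : P.map Y = μ) (hB : Function.Surjective B)
    (h0 : 0 ∈ interior (laplaceDomain B μ))
    {U : Set T} (hU : U ⊆ interior (laplaceDomain B μ)) (hU' : (interior U).Nonempty)
    (u v : T) (A a b e : ℝ) :
    (∀ θ ∈ interior (laplaceDomain B μ), ∫ ω, B u (X ω) * Real.exp (B θ (X ω + Y ω)) ∂P =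
        lineDeriv ℝ (cumulantFun B μ) θ u * laplaceTransform B μ θ ^ 2) ∧
      (P[fun ω ↦ (B u (X ω) - B u (Y ω)) ^ 2 - 2 * A * B u (X ω) * B u (Y ω) |
          MeasurableSpace.comap (fun ω ↦ X ω + Y ω) inferInstance]
            =ᵐ[P] (fun ω ↦ a * B u (X ω + Y ω) + b * B v (X ω + Y ω) + 2 * e) ↔
        ∀ θ ∈ U, lineDeriv ℝ (fun η ↦ lineDeriv ℝ (cumulantFun B μ) η u) θ u =
          A * lineDeriv ℝ (cumulantFun B μ) θ u ^ 2 + a * lineDeriv ℝ (cumulantFun B μ) θ u +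
            b * lineDeriv ℝ (cumulantFun B μ) θ v + e) := by
  have hX' : HasLaw X μ P := ⟨hX.aemeasurable, hXlaw⟩
  have hY' : HasLaw Y μ P := ⟨hY.aemeasurable, hYlaw⟩
  have := hX'.isProbabilityMeasure
  have hZ := (indepFun_iff_hasLaw_prodMk_prod hX' hY').1 hindep
  have hcond := condExp_sq_sub_sub_mul_ae_eq_iff hB (hX.prodMk hY) hZ h0 hU hU' u
    (a • u + b • v) A e
  have hlin (θ : T) (hθ : θ ∈ U) := lineDeriv_cumulantFun_add_smul (hU hθ) u v a b
  refine ⟨fun θ hθ ↦ integral_fst_mul_exp_add hZ hθ u, ?_⟩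
  simpa +contextual [hlin, ← add_assoc] using hcond

end CumulantEquation

section Plane

/-- The dot product of `ℝ × ℝ`, as a pairing of the parameters `θ` with the points `x`. -/
noncomputable def dotPairing : ℝ × ℝ →ₗ[ℝ] StrongDual ℝ (ℝ × ℝ) :=
  (LinearMap.fst ℝ ℝ ℝ).smulRight (ContinuousLinearMap.fst ℝ ℝ ℝ) +
    (LinearMap.snd ℝ ℝ ℝ).smulRight (ContinuousLinearMap.snd ℝ ℝ ℝ)

lemma dotPairing_apply (θ x : ℝ × ℝ) : dotPairing θ x = θ.1 * x.1 + θ.2 * x.2 := rfl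

lemma dotPairing_surjective : Function.Surjective dotPairing := fun l ↦ by
  refine ⟨(l (1, 0), l (0, 1)), ContinuousLinearMap.ext fun x ↦ ?_⟩
  calc dotPairing (l (1, 0), l (0, 1)) x = l (x.1 • (1, 0) + x.2 • (0, 1)) := by
        rw [map_add, map_smul, map_smul, dotPairing_apply, smul_eq_mul, smul_eq_mul, mul_comm,
          mul_comm (l (0, 1))]
    _ = l x := by simp

lemma pd1_eq_lineDeriv (g : ℝ × ℝ → ℝ) : pd1 g = fun θ ↦ lineDeriv ℝ g θ (1, 0) := by
  ext θ
  simpa [pd1, lineDeriv, Prod.add_def] using (deriv_comp_const_add (fun t ↦ g (t, θ.2)) θ.1 0).symm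

lemma pd2_eq_lineDeriv (g : ℝ × ℝ → ℝ) : pd2 g = fun θ ↦ lineDeriv ℝ g θ (0, 1) := by
  ext θ
  simpa [pd2, lineDeriv, Prod.add_def] using (deriv_comp_const_add (fun t ↦ g (θ.1, t)) θ.2 0).symm

end Plane

/-- For i.i.d. `X, Y` with law `μ` on ℝ² whose Laplace transform `L` is finite
on an open set `Θ ∋ 0`, with cumulant function `k = log L`: (i) for `θ ∈ Θ` with `2θ ∈ Θ`,
`E[X₁ exp⟨θ, X+Y⟩] = ∂k/∂θ₁(θ) · L(θ)²`; and (ii) the conditional expectation identity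
`E[(X₁-Y₁)² - 2A X₁Y₁ | X+Y] = a(X₁+Y₁) + b(X₂+Y₂) + 2e` a.s. is equivalent to the PDE
`∂²k/∂θ₁² = A(∂k/∂θ₁)² + a ∂k/∂θ₁ + b ∂k/∂θ₂ + e` on the corresponding open set. -/
theorem stmt18 {Ω : Type*} [MeasurableSpace Ω] (P : Measure Ω) [IsProbabilityMeasure P]
    (X Y : Ω → ℝ × ℝ) (hX : Measurable X) (hY : Measurable Y)
    (hindep : IndepFun X Y P)
    (μ : Measure (ℝ × ℝ)) [IsProbabilityMeasure μ]
    (hXlaw : Measure.map X P = μ) (hYlaw : Measure.map Y P = μ)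
    (Θ : Set (ℝ × ℝ)) (hΘ : IsOpen Θ) (h0 : (0 : ℝ × ℝ) ∈ Θ)
    (hint : ∀ θ ∈ Θ, Integrable (fun x : ℝ × ℝ => Real.exp (θ.1 * x.1 + θ.2 * x.2)) μ)
    (L : ℝ × ℝ → ℝ) (hL : ∀ θ, L θ = ∫ x, Real.exp (θ.1 * x.1 + θ.2 * x.2) ∂μ)
    (k : ℝ × ℝ → ℝ) (hk : ∀ θ, k θ = Real.log (L θ))
    (A a b e : ℝ) :
    (∀ θ ∈ Θ, (2 : ℝ) • θ ∈ Θ →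
        (∫ ω, (X ω).1 * Real.exp (θ.1 * ((X ω).1 + (Y ω).1)
            + θ.2 * ((X ω).2 + (Y ω).2)) ∂P) = pd1 k θ * (L θ) ^ 2) ∧
    ((P[fun ω => ((X ω).1 - (Y ω).1) ^ 2 - 2 * A * (X ω).1 * (Y ω).1
          | MeasurableSpace.comap (fun ω => X ω + Y ω) inferInstance]
        =ᵐ[P] fun ω => a * ((X ω).1 + (Y ω).1) + b * ((X ω).2 + (Y ω).2) + 2 * e)
      ↔ ∀ θ ∈ Θ, (2 : ℝ) • θ ∈ Θ →
          pd1 (pd1 k) θ = A * (pd1 k θ) ^ 2 + a * pd1 k θ + b * pd2 k θ + e) := by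
  obtain rfl : L = laplaceTransform dotPairing μ := funext hL
  obtain rfl : k = cumulantFun dotPairing μ := funext hk
  have hdom : Θ ⊆ interior (laplaceDomain dotPairing μ) := interior_maximal hint hΘ
  have hU : IsOpen {θ | θ ∈ Θ ∧ (2 : ℝ) • θ ∈ Θ} :=
    hΘ.inter (hΘ.preimage (continuous_const_smul 2))
  obtain ⟨hmean, hcond⟩ := stmt18_general hX hY hindep hXlaw hYlaw dotPairing_surjective
    (hdom h0) (fun _ hθ ↦ hdom hθ.1) ⟨0, hU.subset_interior_iff.2 subset_rfl (by simpa using h0)⟩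
    (1, 0) (0, 1) A a b e
  simpa [pd1_eq_lineDeriv, pd2_eq_lineDeriv, dotPairing_apply] using
    And.intro (fun θ hθ (_ : (2 : ℝ) • θ ∈ Θ) ↦ hmean θ (hdom hθ)) hcond
end
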